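/- arXiv:0904.2311 — 2 statements merged into one kernel-verified Lean document; each statement's English description precedes it below -/
import Mathlib

section
/- Fix finite alphabets 𝒳, 𝒜, 𝒰, 𝒴, a pmf P_X on 𝒳, and a channel kernel Q from 𝒳×𝒜 to 𝒴. For a kernel k from 𝒳 to 𝒜×𝒰, let (X,A,U,Y) have joint law P_X(x)·k(a,u|x)·Q(y|x,a) and define F(k) = I(X;A) + I(X;U|Y,A). Then F is convex in k: for any kernels k₁,k₂ and α∈[0,1], F(α·k₁+(1−α)·k₂) ≤ α·F(k₁) + (1−α)·F(k₂). -/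
open scoped BigOperators

noncomputable section

/-- Probability mass of the event `f = a` under the weight function `q` on a finite space. -/
def pmass {Ω α : Type*} [Fintype Ω] [DecidableEq α] (q : Ω → ℝ) (f : Ω → α) (a : α) : ℝ :=
  ∑ ω, if f ω = a then q ω else 0

/-- Shannon entropy (in bits) of the value of `f` under `q`. -/
def ent {Ω α : Type*} [Fintype Ω] [Fintype α] [DecidableEq α] (q : Ω → ℝ) (f : Ω → α) : ℝ :=
  -∑ a, pmass q f a * Real.logb 2 (pmass q f a)

/-- Conditional Shannon entropy `H(f ∣ g)` (in bits). -/
def condEnt {Ω α β : Type*} [Fintype Ω] [Fintype α] [DecidableEq α] [Fintype β] [DecidableEq β]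
    (q : Ω → ℝ) (f : Ω → α) (g : Ω → β) : ℝ :=
  ent q (fun ω => (f ω, g ω)) - ent q g

/-- Mutual information `I(f ; g)` (in bits). -/
def mutInf {Ω α β : Type*} [Fintype Ω] [Fintype α] [DecidableEq α] [Fintype β] [DecidableEq β]
    (q : Ω → ℝ) (f : Ω → α) (g : Ω → β) : ℝ :=
  ent q f + ent q g - ent q (fun ω => (f ω, g ω))

/-- Conditional mutual information `I(f ; g ∣ h)` (in bits). -/
def condMutInf {Ω α β γ : Type*} [Fintype Ω] [Fintype α] [DecidableEq α] [Fintype β]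
    [DecidableEq β] [Fintype γ] [DecidableEq γ]
    (q : Ω → ℝ) (f : Ω → α) (g : Ω → β) (h : Ω → γ) : ℝ :=
  condEnt q f h - condEnt q f (fun ω => (g ω, h ω))

/-- `q` is a probability mass function on `Ω`. -/
def IsPMF {Ω : Type*} [Fintype Ω] (q : Ω → ℝ) : Prop :=
  (∀ ω, 0 ≤ q ω) ∧ ∑ ω, q ω = 1

variable {𝒳 𝒜 𝒰 𝒴 : Type*}

/-- The joint pmf `P_X(x)·k(a,u|x)·Q(y|x,a)` on `𝒳 × 𝒜 × 𝒰 × 𝒴`. -/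
def cvxJoint (PX : 𝒳 → ℝ) (Q : 𝒳 → 𝒜 → 𝒴 → ℝ) (k : 𝒳 → 𝒜 → 𝒰 → ℝ) :
    𝒳 × 𝒜 × 𝒰 × 𝒴 → ℝ :=
  fun z => PX z.1 * k z.1 z.2.1 z.2.2.1 * Q z.1 z.2.1 z.2.2.2

/-- The objective `F(k) = I(X;A) + I(X;U|Y,A)` under the joint law
`P_X(x)·k(a,u|x)·Q(y|x,a)`. -/
def Fobj [Fintype 𝒳] [DecidableEq 𝒳] [Fintype 𝒜] [DecidableEq 𝒜]
    [Fintype 𝒰] [DecidableEq 𝒰] [Fintype 𝒴] [DecidableEq 𝒴]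
    (PX : 𝒳 → ℝ) (Q : 𝒳 → 𝒜 → 𝒴 → ℝ) (k : 𝒳 → 𝒜 → 𝒰 → ℝ) : ℝ :=
  mutInf (cvxJoint PX Q k) (fun z => z.1) (fun z => z.2.1) +
    condMutInf (cvxJoint PX Q k) (fun z => z.1) (fun z => z.2.2.1)
      (fun z => (z.2.2.2, z.2.1))

/-!
By the chain rule, `F = H(X) + H(Y|X,A) - H(Y|A) - H(X|U,Y,A)`. Here `H(X)` depends only on `P_X`,
`H(Y|X,A)` is the average of the entropies of the rows of `Q` and hence affine in the joint law,
and conditional entropy is concave in the joint law because `negMulLog` is concave.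
-/

lemma mul_map_add_mul_map_le_of_concaveOn {𝕜 E : Type*} [Field 𝕜] [LinearOrder 𝕜]
    [IsStrictOrderedRing 𝕜] [AddCommMonoid E] [Module 𝕜 E] {D : Set E} {φ : E → 𝕜}
    (hφ : ConcaveOn 𝕜 D φ) {x y : E} (hx : x ∈ D) (hy : y ∈ D) {s t : 𝕜} (hs : 0 ≤ s)
    (ht : 0 ≤ t) :
    s * φ x + t * φ y ≤ (s + t) * φ ((s + t)⁻¹ • (s • x + t • y)) := by
  rcases (add_nonneg hs ht).eq_or_lt with hst | hst
  · obtain ⟨rfl, rfl⟩ := (add_eq_zero_iff_of_nonneg hs ht).1 hst.symm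
    simp
  have hJensen := hφ.2 hx hy (div_nonneg hs hst.le) (div_nonneg ht hst.le)
    (by rw [← add_div, div_self hst.ne'])
  calc s * φ x + t * φ y
      = (s + t) * (s / (s + t) * φ x + t / (s + t) * φ y) := by field_simp
    _ ≤ (s + t) * φ ((s / (s + t)) • x + (t / (s + t)) • y) :=
        mul_le_mul_of_nonneg_left hJensen hst.le
    _ = (s + t) * φ ((s + t)⁻¹ • (s • x + t • y)) := by
        rw [smul_add, smul_smul, smul_smul, inv_mul_eq_div, inv_mul_eq_div]

section Pmass

variable {Ω α β : Type*} [Fintype Ω] [DecidableEq α] [DecidableEq β]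

lemma pmass_nonneg {q : Ω → ℝ} (hq : 0 ≤ q) (f : Ω → α) (a : α) : 0 ≤ pmass q f a :=
  Finset.sum_nonneg fun ω _ => ite_nonneg (hq ω) le_rfl

lemma pmass_smul_add_smul (c d : ℝ) (q₁ q₂ : Ω → ℝ) (f : Ω → α) (a : α) :
    pmass (c • q₁ + d • q₂) f a = c * pmass q₁ f a + d * pmass q₂ f a := by
  simp only [pmass, Pi.add_apply, Pi.smul_apply, smul_eq_mul, Finset.mul_sum,
    ← Finset.sum_add_distrib, mul_ite, mul_zero, ite_add_ite, add_zero]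

lemma sum_pmass_prodMk [Fintype α] (q : Ω → ℝ) (f : Ω → α) (g : Ω → β) (b : β) :
    ∑ a, pmass q (fun ω => (f ω, g ω)) (a, b) = pmass q g b := by
  simp only [pmass, Prod.mk.injEq, ite_and]
  rw [Finset.sum_comm]
  simp

lemma pmass_prodMk_eq_zero {q : Ω → ℝ} (hq : 0 ≤ q) (f : Ω → α) {g : Ω → β} {b : β}
    (hb : pmass q g b = 0) (a : α) : pmass q (fun ω => (f ω, g ω)) (a, b) = 0 := by
  have hvanish : ∀ ω, g ω = b → q ω = 0 := by
    simpa [pmass, Finset.sum_eq_zero_iff_of_nonneg, ite_nonneg (hq _) le_rfl] using hb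
  refine Finset.sum_eq_zero fun ω _ => ?_
  split_ifs with h
  · exact hvanish ω (Prod.mk.inj h).2
  · rfl

lemma convex_setOf_pmass_eq (f : Ω → α) (P : α → ℝ) :
    Convex ℝ {q : Ω → ℝ | ∀ a, pmass q f a = P a} := by
  intro q₁ h₁ q₂ h₂ c d _ _ hcd a
  rw [pmass_smul_add_smul, h₁ a, h₂ a, ← add_mul, hcd, one_mul]

/-- `W b` is a conditional law of `f` given `g = b`: in the language of channels, `f` is the output
of the channel `W` on input `g`. The product form leaves `W b` unconstrained where `g = b` has
mass zero. -/
def IsCondLaw (q : Ω → ℝ) (f : Ω → α) (g : Ω → β) (W : β → α → ℝ) : Prop :=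
  ∀ b a, pmass q (fun ω => (f ω, g ω)) (a, b) = pmass q g b * W b a

lemma isCondLaw_div {q : Ω → ℝ} (hq : 0 ≤ q) (f : Ω → α) (g : Ω → β) :
    IsCondLaw q f g fun b a => pmass q (fun ω => (f ω, g ω)) (a, b) / pmass q g b :=
  fun _ a => (mul_div_cancel_of_imp' fun hb => pmass_prodMk_eq_zero hq f hb a).symm

lemma convex_setOf_isCondLaw (f : Ω → α) (g : Ω → β) (W : β → α → ℝ) :
    Convex ℝ {q : Ω → ℝ | IsCondLaw q f g W} := by
  intro q₁ h₁ q₂ h₂ c d _ _ _ b a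
  rw [pmass_smul_add_smul, pmass_smul_add_smul, h₁ b a, h₂ b a]
  ring

end Pmass

section Entropy

open Real

variable {Ω α β : Type*} [Fintype Ω] [Fintype α] [DecidableEq α] [Fintype β] [DecidableEq β]

lemma ent_eq_sum_negMulLog (q : Ω → ℝ) (f : Ω → α) :
    ent q f = (∑ a, negMulLog (pmass q f a)) / log 2 := by
  simp only [ent, negMulLog, logb, Finset.sum_div, ← Finset.sum_neg_distrib]
  exact Finset.sum_congr rfl fun a _ => by ring

lemma ent_comp_equiv (q : Ω → ℝ) (f : Ω → α) (e : α ≃ β) :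
    ent q (fun ω => e (f ω)) = ent q f := by
  simp only [ent, ← Equiv.sum_comp e, pmass, e.apply_eq_iff_eq]

lemma IsCondLaw.condEnt_eq {q : Ω → ℝ} {f : Ω → α} {g : Ω → β} {W : β → α → ℝ}
    (hW : IsCondLaw q f g W) :
    condEnt q f g = (∑ b, pmass q g b * ∑ a, negMulLog (W b a)) / log 2 := by
  have hrow (b : β) : ∑ a, negMulLog (pmass q (fun ω => (f ω, g ω)) (a, b)) =
      negMulLog (pmass q g b) + pmass q g b * ∑ a, negMulLog (W b a) := by
    have hmass : pmass q g b * ∑ a, W b a = pmass q g b := by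
      simp only [Finset.mul_sum, ← hW b, sum_pmass_prodMk]
    simp only [hW b, negMulLog_mul, Finset.sum_add_distrib, ← Finset.sum_mul, ← Finset.mul_sum]
    rw [negMulLog]
    linear_combination -log (pmass q g b) * hmass
  rw [condEnt, ent_eq_sum_negMulLog, ent_eq_sum_negMulLog, Fintype.sum_prod_type_right, ← sub_div]
  simp only [hrow, Finset.sum_add_distrib, add_sub_cancel_left]

theorem concaveOn_condEnt (f : Ω → α) (g : Ω → β) :
    ConcaveOn ℝ (Set.Ici 0) fun q : Ω → ℝ => condEnt q f g := by
  refine ⟨convex_Ici 0, fun q₁ h₁ q₂ h₂ c d hc hd _ => ?_⟩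
  have hmix : 0 ≤ c • q₁ + d • q₂ := add_nonneg (smul_nonneg hc h₁) (smul_nonneg hd h₂)
  simp only [(isCondLaw_div h₁ f g).condEnt_eq, (isCondLaw_div h₂ f g).condEnt_eq,
    (isCondLaw_div hmix f g).condEnt_eq, smul_eq_mul, ← mul_div_assoc, ← add_div, Finset.mul_sum,
    ← Finset.sum_add_distrib]
  refine div_le_div_of_nonneg_right
    (Finset.sum_le_sum fun b _ => Finset.sum_le_sum fun a _ => ?_) (log_nonneg one_le_two)
  have hcond {q : Ω → ℝ} (hq : 0 ≤ q) :
      0 ≤ pmass q (fun ω => (f ω, g ω)) (a, b) / pmass q g b :=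
    div_nonneg (pmass_nonneg hq _ _) (pmass_nonneg hq g b)
  have hJensen := mul_map_add_mul_map_le_of_concaveOn concaveOn_negMulLog (hcond h₁) (hcond h₂)
    (mul_nonneg hc (pmass_nonneg h₁ g b)) (mul_nonneg hd (pmass_nonneg h₂ g b))
  simpa only [pmass_smul_add_smul, smul_eq_mul, inv_mul_eq_div, mul_assoc,
    ← isCondLaw_div h₁ f g b a, ← isCondLaw_div h₂ f g b a] using hJensen

lemma convexOn_ent_of_pmass_eq (f : Ω → α) (P : α → ℝ) :
    ConvexOn ℝ {q : Ω → ℝ | ∀ a, pmass q f a = P a} fun q => ent q f :=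
  (convexOn_const (-∑ a, P a * logb 2 (P a)) (convex_setOf_pmass_eq f P)).congr
    fun q (hq : ∀ a, pmass q f a = P a) => by simp only [ent, hq]

lemma convexOn_condEnt_of_isCondLaw (f : Ω → α) (g : Ω → β) (W : β → α → ℝ) :
    ConvexOn ℝ {q : Ω → ℝ | IsCondLaw q f g W} fun q => condEnt q f g := by
  have hconv := convex_setOf_isCondLaw f g W
  refine ⟨hconv, fun q₁ h₁ q₂ h₂ c d hc hd hcd => le_of_eq ?_⟩
  simp only [h₁.condEnt_eq, h₂.condEnt_eq, (hconv h₁ h₂ hc hd hcd).condEnt_eq,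
    pmass_smul_add_smul, add_mul, mul_assoc, Finset.sum_add_distrib, ← Finset.mul_sum, add_div,
    mul_div_assoc, smul_eq_mul]

end Entropy

section Objective

variable {Ω : Type*} [Fintype Ω]
  [Fintype 𝒳] [DecidableEq 𝒳] [Fintype 𝒜] [DecidableEq 𝒜]
  [Fintype 𝒰] [DecidableEq 𝒰] [Fintype 𝒴] [DecidableEq 𝒴]

lemma mutInf_add_condMutInf_eq (q : Ω → ℝ) (X : Ω → 𝒳) (A : Ω → 𝒜) (U : Ω → 𝒰) (Y : Ω → 𝒴) :
    mutInf q X A + condMutInf q X U (fun ω => (Y ω, A ω)) =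
      ent q X + condEnt q Y (fun ω => (X ω, A ω)) - condEnt q Y A -
        condEnt q X (fun ω => (U ω, (Y ω, A ω))) := by
  have hswap : ent q (fun ω => (X ω, (Y ω, A ω))) = ent q (fun ω => (Y ω, (X ω, A ω))) :=
    ent_comp_equiv q (fun ω => (Y ω, (X ω, A ω)))
      ⟨fun t => (t.2.1, t.1, t.2.2), fun t => (t.2.1, t.1, t.2.2), fun _ => rfl, fun _ => rfl⟩
  simp only [mutInf, condMutInf, condEnt, hswap]
  ring

theorem Fobj_convex_general (X : Ω → 𝒳) (A : Ω → 𝒜) (U : Ω → 𝒰) (Y : Ω → 𝒴)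
    (PX : 𝒳 → ℝ) (W : 𝒳 × 𝒜 → 𝒴 → ℝ) :
    ConvexOn ℝ (Set.Ici 0 ∩ ({q : Ω → ℝ | ∀ x, pmass q X x = PX x} ∩
        {q | IsCondLaw q Y (fun ω => (X ω, A ω)) W}))
      fun q => mutInf q X A + condMutInf q X U (fun ω => (Y ω, A ω)) := by
  have hS := (convex_Ici (𝕜 := ℝ) (0 : Ω → ℝ)).inter
    ((convex_setOf_pmass_eq X PX).inter (convex_setOf_isCondLaw Y (fun ω => (X ω, A ω)) W))
  have hX := (convexOn_ent_of_pmass_eq X PX).subset (fun _ hq => hq.2.1) hS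
  have hYXA := (convexOn_condEnt_of_isCondLaw Y _ W).subset (fun _ hq => hq.2.2) hS
  have hYA := (concaveOn_condEnt Y A).subset (fun _ hq => hq.1) hS
  have hXUYA := (concaveOn_condEnt X fun ω => (U ω, (Y ω, A ω))).subset (fun _ hq => hq.1) hS
  exact (((hX.add hYXA).sub hYA).sub hXUYA).congr
    fun q _ => (mutInf_add_condMutInf_eq q X A U Y).symm

end Objective

section Joint

lemma cvxJoint_nonneg {PX : 𝒳 → ℝ} {Q : 𝒳 → 𝒜 → 𝒴 → ℝ} {k : 𝒳 → 𝒜 → 𝒰 → ℝ}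
    (hPX : ∀ x, 0 ≤ PX x) (hQ : ∀ x a y, 0 ≤ Q x a y) (hk : ∀ x a u, 0 ≤ k x a u) :
    0 ≤ cvxJoint PX Q k :=
  fun _ => mul_nonneg (mul_nonneg (hPX _) (hk _ _ _)) (hQ _ _ _)

lemma cvxJoint_smul_add_smul (PX : 𝒳 → ℝ) (Q : 𝒳 → 𝒜 → 𝒴 → ℝ) (k₁ k₂ : 𝒳 → 𝒜 → 𝒰 → ℝ)
    (c d : ℝ) :
    cvxJoint PX Q (fun x a u => c * k₁ x a u + d * k₂ x a u) =
      c • cvxJoint PX Q k₁ + d • cvxJoint PX Q k₂ := by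
  funext z
  simp only [cvxJoint, Pi.add_apply, Pi.smul_apply, smul_eq_mul]
  ring

variable [Fintype 𝒳] [DecidableEq 𝒳] [Fintype 𝒜] [Fintype 𝒰] [Fintype 𝒴]

lemma pmass_cvxJoint_fst (PX : 𝒳 → ℝ) {Q : 𝒳 → 𝒜 → 𝒴 → ℝ} (hQ : ∀ x a, ∑ y, Q x a y = 1)
    {k : 𝒳 → 𝒜 → 𝒰 → ℝ} (hk : ∀ x, ∑ a, ∑ u, k x a u = 1) (x : 𝒳) :
    pmass (cvxJoint PX Q k) (fun z => z.1) x = PX x := by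
  simp [pmass, cvxJoint, Fintype.sum_prod_type, Finset.sum_ite_irrel, ← Finset.mul_sum, hQ, hk]

lemma isCondLaw_cvxJoint [DecidableEq 𝒜] [DecidableEq 𝒴] (PX : 𝒳 → ℝ) {Q : 𝒳 → 𝒜 → 𝒴 → ℝ}
    (hQ : ∀ x a, ∑ y, Q x a y = 1) (k : 𝒳 → 𝒜 → 𝒰 → ℝ) :
    IsCondLaw (cvxJoint PX Q k) (fun z => z.2.2.2) (fun z => (z.1, z.2.1))
      fun b y => Q b.1 b.2 y := by
  rintro ⟨x, a⟩ y
  simp [pmass, cvxJoint, Fintype.sum_prod_type, Finset.sum_ite_irrel, ite_and, ← Finset.mul_sum,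
    ← Finset.sum_mul, hQ]

end Joint

/-- For fixed `P_X` and channel `Q = P_{Y|X,A}`, the map
`k ↦ F(k) = I(X;A) + I(X;U|Y,A)` is convex in the kernel `k = P_{A,U|X}`. -/
theorem Fobj_convex [Fintype 𝒳] [DecidableEq 𝒳] [Fintype 𝒜] [DecidableEq 𝒜]
    [Fintype 𝒰] [DecidableEq 𝒰] [Fintype 𝒴] [DecidableEq 𝒴]
    (PX : 𝒳 → ℝ) (hPX : IsPMF PX)
    (Q : 𝒳 → 𝒜 → 𝒴 → ℝ) (hQ0 : ∀ x a y, 0 ≤ Q x a y) (hQ1 : ∀ x a, ∑ y, Q x a y = 1)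
    (k₁ k₂ : 𝒳 → 𝒜 → 𝒰 → ℝ)
    (hk₁0 : ∀ x a u, 0 ≤ k₁ x a u) (hk₁1 : ∀ x, ∑ a, ∑ u, k₁ x a u = 1)
    (hk₂0 : ∀ x a u, 0 ≤ k₂ x a u) (hk₂1 : ∀ x, ∑ a, ∑ u, k₂ x a u = 1)
    (α : ℝ) (hα0 : 0 ≤ α) (hα1 : α ≤ 1) :
    Fobj PX Q (fun x a u => α * k₁ x a u + (1 - α) * k₂ x a u) ≤
      α * Fobj PX Q k₁ + (1 - α) * Fobj PX Q k₂ := by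
  rw [Fobj, cvxJoint_smul_add_smul]
  exact (Fobj_convex_general _ _ _ _ PX fun b y => Q b.1 b.2 y).2
    ⟨cvxJoint_nonneg hPX.1 hQ0 hk₁0, pmass_cvxJoint_fst PX hQ1 hk₁1, isCondLaw_cvxJoint PX hQ1 k₁⟩
    ⟨cvxJoint_nonneg hPX.1 hQ0 hk₂0, pmass_cvxJoint_fst PX hQ1 hk₂1, isCondLaw_cvxJoint PX hQ1 k₂⟩
    hα0 (sub_nonneg.2 hα1) (add_sub_cancel α 1)
end
end

section
/- In the definition of R^(I)(D,C) = min over finite auxiliary alphabets 𝒰 and kernels P_{A,U|X} (subject to the distortion and cost constraints) of I(X;A)+I(X;U|Y,A), it suffices to restrict to joint distributions in which A is a deterministic function of U: the infimum over all kernels P_{A,U|X} equals the infimum over joint laws of the form P_X(x)·P_{U|X}(u|x)·1{a=f(u)}·P_{Y|X,A}(y|x,a) for some function f:𝒰→𝒜 (allowing arbitrary finite 𝒰 in both infima). -/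
open scoped BigOperators

noncomputable section

variable {𝒳 𝒜 𝒴 Xh : Type}

/-- Joint pmf on `(Xⁿ, Yⁿ)` induced by a blocklength-`n` scheme in which the decoder,
upon receiving the message `enc xⁿ`, chooses the action sequence `act (enc xⁿ)`, and the
side information `Yⁿ` is produced by the memoryless channel `Q = P_{Y|X,A}`. -/
def decSchemeJoint [Fintype 𝒳] (PX : 𝒳 → ℝ) (Q : 𝒳 → 𝒜 → 𝒴 → ℝ) {n M : ℕ}
    (enc : (Fin n → 𝒳) → Fin M) (act : Fin M → Fin n → 𝒜) :
    (Fin n → 𝒳) × (Fin n → 𝒴) → ℝ :=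
  fun w => (∏ i, PX (w.1 i)) * ∏ i, Q (w.1 i) (act (enc w.1) i) (w.2 i)

/-- Expected total distortion `E[∑ᵢ ρ(Xᵢ, X̂ᵢ)]` of a scheme, where `X̂ⁿ = dec (enc Xⁿ) Yⁿ`. -/
def decSchemeDist [Fintype 𝒳] [Fintype 𝒴] (PX : 𝒳 → ℝ) (Q : 𝒳 → 𝒜 → 𝒴 → ℝ)
    (ρ : 𝒳 → Xh → ℝ) {n M : ℕ}
    (enc : (Fin n → 𝒳) → Fin M) (act : Fin M → Fin n → 𝒜)
    (dec : Fin M → (Fin n → 𝒴) → Fin n → Xh) : ℝ :=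
  ∑ w : (Fin n → 𝒳) × (Fin n → 𝒴),
    decSchemeJoint PX Q enc act w * ∑ i, ρ (w.1 i) (dec (enc w.1) w.2 i)

/-- Expected total action cost `E[∑ᵢ Λ(Aᵢ)]` of a scheme. -/
def decSchemeCost [Fintype 𝒳] (PX : 𝒳 → ℝ) (Λ : 𝒜 → ℝ) {n M : ℕ}
    (enc : (Fin n → 𝒳) → Fin M) (act : Fin M → Fin n → 𝒜) : ℝ :=
  ∑ xs : Fin n → 𝒳, (∏ i, PX (xs i)) * ∑ i, Λ (act (enc xs) i)

/-- The single-letter joint law `P_X(x)·k(a,u|x)·Q(y|x,a)` on `𝒳 × 𝒜 × U × 𝒴`. -/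
def slJoint (PX : 𝒳 → ℝ) (Q : 𝒳 → 𝒜 → 𝒴 → ℝ) (U : Type) (k : 𝒳 → 𝒜 → U → ℝ) :
    𝒳 × 𝒜 × U × 𝒴 → ℝ :=
  fun z => PX z.1 * k z.1 z.2.1 z.2.2.1 * Q z.1 z.2.1 z.2.2.2

/-- `(R, D, C)` is achievable for the decoder-actions setting: for every `ε > 0` and all
sufficiently large `n`, there is a blocklength-`n` scheme with message set
`{1, …, ⌈2^{n(R+ε)}⌉}` whose expected distortion is at most `n(D+ε)` and whose expected
action cost is at most `n(C+ε)`. -/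
def AchievableDec [Fintype 𝒳] [Fintype 𝒴] (PX : 𝒳 → ℝ) (Q : 𝒳 → 𝒜 → 𝒴 → ℝ)
    (ρ : 𝒳 → Xh → ℝ) (Λ : 𝒜 → ℝ) (R D C : ℝ) : Prop :=
  ∀ ε > (0 : ℝ), ∃ N : ℕ, ∀ n ≥ N,
    ∃ (enc : (Fin n → 𝒳) → Fin ⌈(2 : ℝ) ^ ((n : ℝ) * (R + ε))⌉₊)
      (act : Fin ⌈(2 : ℝ) ^ ((n : ℝ) * (R + ε))⌉₊ → Fin n → 𝒜)
      (dec : Fin ⌈(2 : ℝ) ^ ((n : ℝ) * (R + ε))⌉₊ → (Fin n → 𝒴) → Fin n → Xh),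
      decSchemeDist PX Q ρ enc act dec ≤ n * (D + ε) ∧
      decSchemeCost PX Λ enc act ≤ n * (C + ε)

/-- `(U, k)` with auxiliary alphabet `U` (with instances `iU`, `dU`) and kernel
`k = P_{A,U|X}` witnesses the value `r` in the single-letter expression: `k` is a valid
kernel, the induced joint law `P_X·k·Q` admits a reconstruction map meeting the distortion
constraint `D`, meets the cost constraint `C`, and `r = I(X;A) + I(X;U|Y,A)`. -/
def SLWitnessDec [Fintype 𝒳] [DecidableEq 𝒳] [Fintype 𝒜] [DecidableEq 𝒜]
    [Fintype 𝒴] [DecidableEq 𝒴]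
    (PX : 𝒳 → ℝ) (Q : 𝒳 → 𝒜 → 𝒴 → ℝ) (ρ : 𝒳 → Xh → ℝ) (Λ : 𝒜 → ℝ)
    (D C r : ℝ) (U : Type) (iU : Fintype U) (dU : DecidableEq U)
    (k : 𝒳 → 𝒜 → U → ℝ) : Prop :=
  letI := iU
  letI := dU
  (∀ x a u, 0 ≤ k x a u) ∧ (∀ x, ∑ a, ∑ u, k x a u = 1) ∧
  (∃ xhat : U → 𝒴 → Xh,
      ∑ z : 𝒳 × 𝒜 × U × 𝒴, slJoint PX Q U k z * ρ z.1 (xhat z.2.2.1 z.2.2.2) ≤ D) ∧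
  (∑ z : 𝒳 × 𝒜 × U × 𝒴, slJoint PX Q U k z * Λ z.2.1 ≤ C) ∧
  r = mutInf (slJoint PX Q U k) (fun z => z.1) (fun z => z.2.1) +
      condMutInf (slJoint PX Q U k) (fun z => z.1) (fun z => z.2.2.1)
        (fun z => (z.2.2.2, z.2.1))

/-!
Replace the auxiliary letter `U` by the pair `(A, U)`, of which `A` is the first coordinate. The
new joint law is the law of `(X, A, (A, U), Y)` under the old one. The decoder can ignore the added
coordinate, so distortion and cost do not change, and neither does the objective:
`I(X; A, U | Y, A) = I(X; U | Y, A)`, since `A` is already in the conditioning.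
Hence both infima range over the same set of values.
-/

section Law

variable {Ω Ω' α β γ δ : Type*} [Fintype Ω]

theorem pmass_apply_of_injective [DecidableEq α] (q : Ω → ℝ) {e : Ω → α}
    (he : Function.Injective e) (ω : Ω) : pmass q e (e ω) = q ω := by
  classical
  simp [pmass, he.eq_iff]

theorem pmass_eq_zero_of_notMem_range [DecidableEq α] (q : Ω → ℝ) {f : Ω → α} {a : α}
    (ha : a ∉ Set.range f) : pmass q f a = 0 :=
  Finset.sum_eq_zero fun ω _ => if_neg fun h => ha ⟨ω, h⟩

theorem sum_pmass_mul [Fintype α] [DecidableEq α] (q : Ω → ℝ) (f : Ω → α) (F : α → ℝ) :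
    ∑ a, pmass q f a * F a = ∑ ω, q ω * F (f ω) := by
  simp only [pmass, Finset.sum_mul]
  rw [Finset.sum_comm]
  simp

variable [Fintype Ω'] [DecidableEq Ω']

theorem pmass_pmass [DecidableEq α] (q : Ω → ℝ) (e : Ω → Ω') (f : Ω' → α) :
    pmass (pmass q e) f = pmass q fun ω => f (e ω) := by
  funext a
  simpa [pmass] using sum_pmass_mul q e fun ω' => if f ω' = a then 1 else 0

variable [Fintype α] [DecidableEq α] [Fintype β] [DecidableEq β] [Fintype γ] [DecidableEq γ]

theorem ent_pmass (q : Ω → ℝ) (e : Ω → Ω') (f : Ω' → α) :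
    ent (pmass q e) f = ent q fun ω => f (e ω) := by
  simp only [ent, pmass_pmass]

theorem mutInf_pmass (q : Ω → ℝ) (e : Ω → Ω') (f : Ω' → α) (g : Ω' → β) :
    mutInf (pmass q e) f g = mutInf q (fun ω => f (e ω)) fun ω => g (e ω) := by
  simp only [mutInf, ent_pmass]

theorem condMutInf_pmass (q : Ω → ℝ) (e : Ω → Ω') (f : Ω' → α) (g : Ω' → β) (h : Ω' → γ) :
    condMutInf (pmass q e) f g h =
      condMutInf q (fun ω => f (e ω)) (fun ω => g (e ω)) fun ω => h (e ω) := by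
  simp only [condMutInf, condEnt, ent_pmass]

theorem ent_comp_of_injective (q : Ω → ℝ) (f : Ω → α) {i : α → β} (hi : Function.Injective i) :
    ent q (fun ω => i (f ω)) = ent q f := by
  unfold ent
  rw [← pmass_pmass q f i]
  refine congrArg Neg.neg (Fintype.sum_of_injective i hi _ _ (fun b hb => ?_) fun a => ?_).symm
  · rw [pmass_eq_zero_of_notMem_range _ hb, zero_mul]
  · rw [pmass_apply_of_injective _ hi]

theorem condEnt_comp_of_injective (q : Ω → ℝ) (f : Ω → α) (g : Ω → β) {i : β → γ}
    (hi : Function.Injective i) : condEnt q f (fun ω => i (g ω)) = condEnt q f g :=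
  congrArg₂ (· - ·)
    (ent_comp_of_injective q (fun ω => (f ω, g ω)) (Function.injective_id.prodMap hi))
    (ent_comp_of_injective q g hi)

theorem condMutInf_prodMk_comp_cond [Fintype δ] [DecidableEq δ] (q : Ω → ℝ) (f : Ω → α) (g : Ω → β)
    (h : Ω → γ) (φ : γ → δ) :
    condMutInf q f (fun ω => (φ (h ω), g ω)) h = condMutInf q f g h := by
  have hi : Function.Injective fun p : β × γ => ((φ p.2, p.1), p.2) := by
    rintro ⟨b, c⟩ ⟨b', c'⟩ hp
    simp_all
  have hcond : condEnt q f (fun ω => ((φ (h ω), g ω), h ω)) = condEnt q f fun ω => (g ω, h ω) := by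
    simpa only using condEnt_comp_of_injective q f (fun ω => (g ω, h ω)) hi
  simp only [condMutInf, hcond]

end Law

section AdjoinAction

variable {U : Type}

/-- The outcome `(x, a, u, y)` with its auxiliary letter `u` replaced by `(a, u)`; the action
becomes a function, `Prod.fst`, of the new auxiliary letter. -/
def adjoinAction (z : 𝒳 × 𝒜 × U × 𝒴) : 𝒳 × 𝒜 × (𝒜 × U) × 𝒴 :=
  (z.1, z.2.1, (z.2.1, z.2.2.1), z.2.2.2)

theorem adjoinAction_injective :
    Function.Injective (adjoinAction : 𝒳 × 𝒜 × U × 𝒴 → 𝒳 × 𝒜 × (𝒜 × U) × 𝒴) := by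
  rintro ⟨x, a, u, y⟩ ⟨x', a', u', y'⟩ h
  simp_all [adjoinAction]

theorem slJoint_adjoinAction [Fintype 𝒳] [DecidableEq 𝒳] [Fintype 𝒜] [DecidableEq 𝒜] [Fintype 𝒴]
    [DecidableEq 𝒴] [Fintype U] [DecidableEq U] (PX : 𝒳 → ℝ) (Q : 𝒳 → 𝒜 → 𝒴 → ℝ)
    (k : 𝒳 → 𝒜 → U → ℝ) :
    slJoint PX Q (𝒜 × U) (fun x a u => if a = u.1 then k x u.1 u.2 else 0) =
      pmass (slJoint PX Q U k) adjoinAction := by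
  funext ⟨x, a, ⟨b, u⟩, y⟩
  by_cases hab : a = b
  · subst hab
    have hmass : pmass (slJoint PX Q U k) adjoinAction (x, a, (a, u), y) =
        slJoint PX Q U k (x, a, u, y) :=
      pmass_apply_of_injective _ adjoinAction_injective (x, a, u, y)
    simp [hmass, slJoint]
  · have hrange : (x, a, (b, u), y) ∉ Set.range (adjoinAction : 𝒳 × 𝒜 × U × 𝒴 → _) := by
      rintro ⟨z, hz⟩
      obtain ⟨-, rfl, ⟨rfl, -⟩, -⟩ := by simpa [adjoinAction] using hz
      exact hab rfl
    simp [slJoint, hab, pmass_eq_zero_of_notMem_range _ hrange]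

theorem SLWitnessDec.adjoinAction [Fintype 𝒳] [DecidableEq 𝒳] [Fintype 𝒜] [DecidableEq 𝒜]
    [Fintype 𝒴] [DecidableEq 𝒴] {PX : 𝒳 → ℝ} {Q : 𝒳 → 𝒜 → 𝒴 → ℝ} {ρ : 𝒳 → Xh → ℝ} {Λ : 𝒜 → ℝ}
    {D C r : ℝ} [iU : Fintype U] [dU : DecidableEq U] {k : 𝒳 → 𝒜 → U → ℝ}
    (hk : SLWitnessDec PX Q ρ Λ D C r U iU dU k) :
    SLWitnessDec PX Q ρ Λ D C r (𝒜 × U) inferInstance inferInstance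
      (fun x a u => if a = u.1 then k x u.1 u.2 else 0) := by
  obtain ⟨hnonneg, hsum, ⟨xhat, hdist⟩, hcost, hr⟩ := hk
  refine ⟨fun x a u => ite_nonneg (hnonneg x u.1 u.2) le_rfl, fun x => ?_,
    ⟨fun u y => xhat u.2 y, ?_⟩, ?_, ?_⟩
  · rw [Finset.sum_comm]
    simpa [Fintype.sum_prod_type] using hsum x
  · rw [slJoint_adjoinAction, sum_pmass_mul]
    exact hdist
  · rw [slJoint_adjoinAction, sum_pmass_mul]
    exact hcost
  · rw [hr, slJoint_adjoinAction, mutInf_pmass, condMutInf_pmass]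
    exact congrArg _ (condMutInf_prodMk_comp_cond (slJoint PX Q U k) (fun z => z.1)
      (fun z => z.2.2.1) (fun z => (z.2.2.2, z.2.1)) Prod.snd).symm

end AdjoinAction

theorem deterministic_action_of_aux_suffices_general
    [Fintype 𝒳] [DecidableEq 𝒳] [Fintype 𝒜] [DecidableEq 𝒜]
    [Fintype 𝒴] [DecidableEq 𝒴]
    (PX : 𝒳 → ℝ) (_hPX : IsPMF PX)
    (Q : 𝒳 → 𝒜 → 𝒴 → ℝ) (_hQ0 : ∀ x a y, 0 ≤ Q x a y) (_hQ1 : ∀ x a, ∑ y, Q x a y = 1)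
    (ρ : 𝒳 → Xh → ℝ) (Λ : 𝒜 → ℝ) (D C : ℝ) :
    {r : ℝ | ∃ (U : Type) (iU : Fintype U) (dU : DecidableEq U)
        (k : 𝒳 → 𝒜 → U → ℝ), SLWitnessDec PX Q ρ Λ D C r U iU dU k} =
      {r : ℝ | ∃ (U : Type) (iU : Fintype U) (dU : DecidableEq U)
        (kU : 𝒳 → U → ℝ) (f : U → 𝒜),
        ((∀ x u, 0 ≤ kU x u) ∧ (∀ x, ∑ u, kU x u = 1)) ∧
        SLWitnessDec PX Q ρ Λ D C r U iU dU
          (fun x a u => if a = f u then kU x u else 0)} := by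
  ext r
  constructor
  · rintro ⟨U, iU, dU, k, hk⟩
    have hsum (x : 𝒳) : ∑ u : 𝒜 × U, k x u.1 u.2 = 1 :=
      (Fintype.sum_prod_type _).trans (hk.2.1 x)
    exact ⟨𝒜 × U, inferInstance, inferInstance, fun x u => k x u.1 u.2, Prod.fst,
      ⟨fun x u => hk.1 x u.1 u.2, hsum⟩, hk.adjoinAction⟩
  · rintro ⟨U, iU, dU, kU, f, -, hk⟩
    exact ⟨U, iU, dU, _, hk⟩

/-- In the single-letter expression
`R^(I)(D,C) = min [ I(X;A) + I(X;U|Y,A) ]` (minimum over finite auxiliary alphabets `U`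
and kernels `P_{A,U|X}` subject to the distortion and cost constraints), it suffices to
restrict to joint laws in which `A` is a deterministic function of `U`, i.e. of the form
`P_X(x)·P_{U|X}(u|x)·1{a = f(u)}·P_{Y|X,A}(y|x,a)` for some `f : U → 𝒜`. -/
theorem deterministic_action_of_aux_suffices
    [Fintype 𝒳] [DecidableEq 𝒳] [Fintype 𝒜] [DecidableEq 𝒜]
    [Fintype 𝒴] [DecidableEq 𝒴]
    (PX : 𝒳 → ℝ) (hPX : IsPMF PX)
    (Q : 𝒳 → 𝒜 → 𝒴 → ℝ) (hQ0 : ∀ x a y, 0 ≤ Q x a y) (hQ1 : ∀ x a, ∑ y, Q x a y = 1)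
    (ρ : 𝒳 → Xh → ℝ) (hρ : ∀ x xh, 0 ≤ ρ x xh)
    (Λ : 𝒜 → ℝ) (hΛ : ∀ a, 0 ≤ Λ a)
    (D C : ℝ) (hD : 0 ≤ D) (hC : 0 ≤ C) :
    sInf {r : ℝ | ∃ (U : Type) (iU : Fintype U) (dU : DecidableEq U)
        (k : 𝒳 → 𝒜 → U → ℝ), SLWitnessDec PX Q ρ Λ D C r U iU dU k} =
      sInf {r : ℝ | ∃ (U : Type) (iU : Fintype U) (dU : DecidableEq U)
        (kU : 𝒳 → U → ℝ) (f : U → 𝒜),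
        (letI := iU
         letI := dU
         (∀ x u, 0 ≤ kU x u) ∧ (∀ x, ∑ u, kU x u = 1)) ∧
        SLWitnessDec PX Q ρ Λ D C r U iU dU
          (fun x a u => if a = f u then kU x u else 0)} :=
  congrArg sInf (deterministic_action_of_aux_suffices_general PX hPX Q hQ0 hQ1 ρ Λ D C)
end
end
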